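/- arXiv:2112.02553 — 2 statements merged into one kernel-verified Lean document; each statement's English description precedes it below -/
import Mathlib

section
/- For all real numbers R and r_S with 0 ≤ r_S < R and every angle φ ∈ ℝ: sinh R − sinh r_S · cos φ > 0 and 0 < (cosh R − cosh r_S)/(sinh R − sinh r_S · cos φ) < 1. Consequently, the beach-ellipse radius function f_S(φ) = artanh((cosh R − cosh r_S)/(sinh R − sinh r_S · cos(φ − φ_S))) of a site S = (r_S, φ_S) with 0 ≤ r_S < R is well defined for every φ and satisfies 0 < f_S(φ) < R, i.e. the beach ellipse of S lies strictly between the pole and the sweep circle. -/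
/-- Inverse hyperbolic tangent: `artanh x = (1/2) · log ((1 + x)/(1 − x))`. -/
noncomputable def artanh (x : ℝ) : ℝ := (1 / 2) * Real.log ((1 + x) / (1 - x))

/-- Beach-ellipse radius function of a site `(r_S, φ_S)` for sweep radius `R`. -/
noncomputable def ellipseFun (R rS φS φ : ℝ) : ℝ :=
  artanh ((Real.cosh R - Real.cosh rS) /
    (Real.sinh R - Real.sinh rS * Real.cos (φ - φS)))

/-!
Since `cosh² R - sinh² R = 1`, the bound `(cosh R - cosh r) / (sinh R - sinh r cos θ) < tanh R`
rearranges to `1 < cosh R cosh r - sinh R sinh r cos θ`. By the hyperbolic law of cosines the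
right-hand side is `cosh d`, where `d` is the distance from the site to a point of the sweep circle,
and `d > 0` because the site lies inside the circle. Applying `artanh` to `0 < · < tanh R` puts the
beach ellipse between the pole and the circle.
-/

theorem sinh_mul_cos_lt_sinh {r R : ℝ} (hr : |r| < R) (θ : ℝ) :
    Real.sinh r * Real.cos θ < Real.sinh R :=
  calc
    Real.sinh r * Real.cos θ ≤ |Real.sinh r| * |Real.cos θ| :=
      (le_abs_self _).trans_eq (abs_mul _ _)
    _ ≤ |Real.sinh r| := mul_le_of_le_one_right (abs_nonneg _) (Real.abs_cos_le_one θ)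
    _ = Real.sinh |r| := Real.abs_sinh r
    _ < Real.sinh R := Real.sinh_lt_sinh.2 hr

theorem one_lt_cosh_mul_cosh_sub_sinh_mul_sinh_mul_cos {x y : ℝ} (hxy : |x| ≠ |y|) (θ : ℝ) :
    1 < Real.cosh x * Real.cosh y - Real.sinh x * Real.sinh y * Real.cos θ := by
  have sinh_bound : Real.sinh x * Real.sinh y * Real.cos θ ≤ Real.sinh |x| * Real.sinh |y| :=
    calc
      Real.sinh x * Real.sinh y * Real.cos θ
          ≤ |Real.sinh x * Real.sinh y| * |Real.cos θ| := (le_abs_self _).trans_eq (abs_mul _ _)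
      _ ≤ |Real.sinh x * Real.sinh y| :=
        mul_le_of_le_one_right (abs_nonneg _) (Real.abs_cos_le_one θ)
      _ = Real.sinh |x| * Real.sinh |y| := by rw [abs_mul, Real.abs_sinh, Real.abs_sinh]
  calc
    1 < Real.cosh (|x| - |y|) := Real.one_lt_cosh.2 (sub_ne_zero.2 hxy)
    _ = Real.cosh x * Real.cosh y - Real.sinh |x| * Real.sinh |y| := by
      rw [Real.cosh_sub, Real.cosh_abs, Real.cosh_abs]
    _ ≤ Real.cosh x * Real.cosh y - Real.sinh x * Real.sinh y * Real.cos θ :=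
      sub_le_sub_left sinh_bound _

theorem cosh_sub_cosh_div_sinh_sub_sinh_mul_cos_pos {r R : ℝ} (hr : |r| < R) (θ : ℝ) :
    0 < (Real.cosh R - Real.cosh r) / (Real.sinh R - Real.sinh r * Real.cos θ) :=
  div_pos (sub_pos.2 (Real.cosh_lt_cosh.2 (hr.trans_le (le_abs_self R))))
    (sub_pos.2 (sinh_mul_cos_lt_sinh hr θ))

theorem cosh_sub_cosh_div_sinh_sub_sinh_mul_cos_lt_tanh {r R : ℝ} (hr : |r| < R) (θ : ℝ) :
    (Real.cosh R - Real.cosh r) / (Real.sinh R - Real.sinh r * Real.cos θ) < Real.tanh R := by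
  have denom_pos : 0 < Real.sinh R - Real.sinh r * Real.cos θ :=
    sub_pos.2 (sinh_mul_cos_lt_sinh hr θ)
  have one_lt_cosh_dist :
      1 < Real.cosh R * Real.cosh r - Real.sinh R * Real.sinh r * Real.cos θ :=
    one_lt_cosh_mul_cosh_sub_sinh_mul_sinh_mul_cos (hr.trans_le (le_abs_self R)).ne' θ
  rw [Real.tanh_eq_sinh_div_cosh, div_lt_div_iff₀ denom_pos (Real.cosh_pos R)]
  linarith [Real.cosh_sq R]

theorem artanh_eq_real_artanh {x : ℝ} (hx : x ∈ Set.Icc (-1) 1) : artanh x = Real.artanh x :=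
  (Real.artanh_eq_half_log hx).symm

theorem artanh_pos {x : ℝ} (hx : x ∈ Set.Ioo 0 1) : 0 < artanh x := by
  rw [artanh_eq_real_artanh ⟨by linarith [hx.1], hx.2.le⟩]
  exact Real.artanh_pos hx

theorem artanh_lt_of_lt_tanh {x y : ℝ} (hx : -1 < x) (hxy : x < Real.tanh y) : artanh x < y := by
  have hy : Real.tanh y < 1 := Real.tanh_lt_one y
  calc
    artanh x = Real.artanh x := artanh_eq_real_artanh ⟨hx.le, (hxy.trans hy).le⟩
    _ < Real.artanh (Real.tanh y) := Real.artanh_lt_artanh hx hy hxy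
    _ = y := Real.artanh_tanh y

theorem ellipseFun_pos {r R : ℝ} (hr : |r| < R) (φS φ : ℝ) : 0 < ellipseFun R r φS φ :=
  artanh_pos ⟨cosh_sub_cosh_div_sinh_sub_sinh_mul_cos_pos hr _,
    (cosh_sub_cosh_div_sinh_sub_sinh_mul_cos_lt_tanh hr _).trans (Real.tanh_lt_one R)⟩

theorem ellipseFun_lt {r R : ℝ} (hr : |r| < R) (φS φ : ℝ) : ellipseFun R r φS φ < R :=
  artanh_lt_of_lt_tanh
    (neg_one_lt_zero.trans (cosh_sub_cosh_div_sinh_sub_sinh_mul_cos_pos hr _))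
    (cosh_sub_cosh_div_sinh_sub_sinh_mul_cos_lt_tanh hr _)

/-- For `0 ≤ r_S < R` the denominator of the beach-ellipse radius function is
positive and the argument of `artanh` lies strictly between `0` and `1`;
consequently the function is well defined and the beach ellipse lies strictly
between the pole and the sweep circle. -/
theorem ellipseFun_well_defined (R rS : ℝ) (hrS₀ : 0 ≤ rS) (hrS : rS < R) :
    (∀ φ : ℝ, 0 < Real.sinh R - Real.sinh rS * Real.cos φ ∧
        0 < (Real.cosh R - Real.cosh rS) / (Real.sinh R - Real.sinh rS * Real.cos φ) ∧
        (Real.cosh R - Real.cosh rS) / (Real.sinh R - Real.sinh rS * Real.cos φ) < 1) ∧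
      ∀ φS φ : ℝ, 0 < ellipseFun R rS φS φ ∧ ellipseFun R rS φS φ < R := by
  have hr : |rS| < R := by rwa [abs_of_nonneg hrS₀]
  refine ⟨fun φ => ⟨?denom_pos, ?ratio_pos, ?ratio_lt_one⟩,
    fun φS φ => ⟨ellipseFun_pos hr φS φ, ellipseFun_lt hr φS φ⟩⟩
  case denom_pos => exact sub_pos.2 (sinh_mul_cos_lt_sinh hr φ)
  case ratio_pos => exact cosh_sub_cosh_div_sinh_sub_sinh_mul_cos_pos hr φ
  case ratio_lt_one =>
    exact (cosh_sub_cosh_div_sinh_sub_sinh_mul_cos_lt_tanh hr φ).trans (Real.tanh_lt_one R)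
end

section
/- Let R > 0 be the sweep-circle radius and S = (r_S, φ_S) a site with 0 ≤ r_S < R. For every point P = (r, φ) with r ≥ 0: dH(P, S) < R − r if and only if r < artanh((cosh R − cosh r_S)/(sinh R − sinh r_S · cos(φ − φ_S))). That is, P lies strictly inside the beach ellipse of S exactly when its radial coordinate is strictly smaller than the beach-ellipse radius function f_S evaluated at its angular coordinate. -/
/-- Inverse hyperbolic cosine: `arcosh x = log (x + √(x² − 1))`. -/
noncomputable def arcosh (x : ℝ) : ℝ := Real.log (x + Real.sqrt (x ^ 2 - 1))

/-- Hyperbolic distance between points given in polar coordinates. -/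
noncomputable def dH (r₁ φ₁ r₂ φ₂ : ℝ) : ℝ :=
  arcosh (Real.cosh r₁ * Real.cosh r₂ - Real.sinh r₁ * Real.sinh r₂ * Real.cos (φ₁ - φ₂))

/-!
The hyperbolic law of cosines gives `cosh (dH P S)` explicitly, and clearing denominators in
`tanh r < (cosh R - cosh r_S) / (sinh R - sinh r_S cos (φ - φ_S))` gives exactly
`cosh (dH P S) < cosh (R - r)`, that is, `dH P S < |R - r|`. The absolute value is harmless: since
`S` is inside the sweep circle, the reverse triangle inequality at the pole yields
`r - R < dH P S`.
-/

open Real (cosh sinh tanh cos)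

theorem cosh_arcosh {x : ℝ} (hx : 1 ≤ x) : cosh (arcosh x) = x :=
  Real.cosh_arcosh hx

theorem arcosh_nonneg {x : ℝ} (hx : 1 ≤ x) : 0 ≤ arcosh x :=
  Real.arcosh_nonneg hx

theorem lt_artanh_iff_tanh_lt {r x : ℝ} (hx : x ∈ Set.Ioo (-1) 1) :
    r < artanh x ↔ tanh r < x := by
  have artanh_eq : artanh x = Real.artanh x :=
    (Real.artanh_eq_half_log (Set.Ioo_subset_Icc_self hx)).symm
  rw [artanh_eq, ← Real.artanh_lt_artanh_iff (Real.tanh_bijOn.mapsTo (Set.mem_univ r)) hx,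
    Real.artanh_tanh]

theorem mul_le_abs_of_abs_le_one (a : ℝ) {c : ℝ} (hc : |c| ≤ 1) : a * c ≤ |a| :=
  calc a * c ≤ |a * c| := le_abs_self _
    _ = |a| * |c| := abs_mul a c
    _ ≤ |a| := mul_le_of_le_one_right (abs_nonneg a) hc

section Distance

variable (r₁ φ₁ r₂ φ₂ : ℝ)

theorem cosh_abs_sub_abs_le_cosh_mul_cosh_sub :
    cosh (|r₁| - |r₂|) ≤ cosh r₁ * cosh r₂ - sinh r₁ * sinh r₂ * cos (φ₁ - φ₂) := by
  rw [Real.cosh_sub, Real.cosh_abs, Real.cosh_abs, ← Real.abs_sinh, ← Real.abs_sinh, ← abs_mul]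
  exact sub_le_sub_left (mul_le_abs_of_abs_le_one _ (Real.abs_cos_le_one _)) _

theorem one_le_cosh_mul_cosh_sub :
    1 ≤ cosh r₁ * cosh r₂ - sinh r₁ * sinh r₂ * cos (φ₁ - φ₂) :=
  (Real.one_le_cosh _).trans (cosh_abs_sub_abs_le_cosh_mul_cosh_sub r₁ φ₁ r₂ φ₂)

theorem cosh_dH :
    cosh (dH r₁ φ₁ r₂ φ₂) = cosh r₁ * cosh r₂ - sinh r₁ * sinh r₂ * cos (φ₁ - φ₂) :=
  cosh_arcosh (one_le_cosh_mul_cosh_sub r₁ φ₁ r₂ φ₂)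

theorem dH_nonneg : 0 ≤ dH r₁ φ₁ r₂ φ₂ :=
  arcosh_nonneg (one_le_cosh_mul_cosh_sub r₁ φ₁ r₂ φ₂)

theorem abs_abs_sub_abs_le_dH : |(|r₁| - |r₂|)| ≤ dH r₁ φ₁ r₂ φ₂ := by
  rw [← abs_of_nonneg (dH_nonneg r₁ φ₁ r₂ φ₂), ← Real.cosh_le_cosh, cosh_dH]
  exact cosh_abs_sub_abs_le_cosh_mul_cosh_sub r₁ φ₁ r₂ φ₂

end Distance

/-- The radius function `f_S(φ)` of the beach ellipse of the site `S = (rS, φS)` for the sweep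
circle of radius `R`: the boundary, in polar coordinates, of the points closer to `S` than to
the circle. -/
noncomputable def beachRadius (R rS φS φ : ℝ) : ℝ :=
  artanh ((cosh R - cosh rS) / (sinh R - sinh rS * cos (φ - φS)))

section BeachEllipse

variable {R rS : ℝ}

theorem sinh_mul_lt_sinh {c : ℝ} (hc : |c| ≤ 1) (h : |rS| < R) : sinh rS * c < sinh R :=
  calc sinh rS * c ≤ |sinh rS| := mul_le_abs_of_abs_le_one _ hc
    _ = sinh |rS| := Real.abs_sinh rS
    _ < sinh R := Real.sinh_lt_sinh.mpr h

theorem cosh_sub_cosh_lt_sinh_sub_sinh_mul {c : ℝ} (hc : |c| ≤ 1) (h : |rS| < R) :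
    cosh R - cosh rS < sinh R - sinh rS * c := by
  have exp_neg_lt : cosh R - sinh R < cosh rS - sinh rS * c :=
    calc cosh R - sinh R = Real.exp (-R) := Real.cosh_sub_sinh R
      _ < Real.exp (-|rS|) := Real.exp_lt_exp.mpr (neg_lt_neg h)
      _ = cosh rS - |sinh rS| := by rw [← Real.cosh_sub_sinh, Real.cosh_abs, Real.abs_sinh]
      _ ≤ cosh rS - sinh rS * c := sub_le_sub_left (mul_le_abs_of_abs_le_one _ hc) _
  linarith

theorem cosh_sub_cosh_div_sinh_sub_mem_Ioo {c : ℝ} (hc : |c| ≤ 1) (h : |rS| < R) :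
    (cosh R - cosh rS) / (sinh R - sinh rS * c) ∈ Set.Ioo 0 1 := by
  have num_pos : 0 < cosh R - cosh rS :=
    sub_pos.mpr (Real.cosh_lt_cosh.mpr (h.trans_le (le_abs_self R)))
  have den_pos : 0 < sinh R - sinh rS * c := sub_pos.mpr (sinh_mul_lt_sinh hc h)
  exact ⟨div_pos num_pos den_pos,
    (div_lt_one den_pos).mpr (cosh_sub_cosh_lt_sinh_sub_sinh_mul hc h)⟩

theorem lt_beachRadius_iff_cosh_dH_lt {φS : ℝ} (h : |rS| < R) (r φ : ℝ) :
    r < beachRadius R rS φS φ ↔ cosh (dH r φ rS φS) < cosh (R - r) := by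
  have hc : |cos (φ - φS)| ≤ 1 := Real.abs_cos_le_one _
  have den_pos : 0 < sinh R - sinh rS * cos (φ - φS) := sub_pos.mpr (sinh_mul_lt_sinh hc h)
  have quotient_mem := Set.Ioo_subset_Ioo_left (by norm_num : (-1 : ℝ) ≤ 0)
    (cosh_sub_cosh_div_sinh_sub_mem_Ioo hc h)
  rw [beachRadius, lt_artanh_iff_tanh_lt quotient_mem, Real.tanh_eq_sinh_div_cosh,
    div_lt_div_iff₀ (Real.cosh_pos r) den_pos, cosh_dH, Real.cosh_sub]
  constructor <;> intro <;> linarith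

theorem inside_ellipse_iff_general {φS : ℝ} (h : |rS| < R) (r φ : ℝ) :
    dH r φ rS φS < R - r ↔ r < beachRadius R rS φS φ := by
  have sub_lt_dH : r - R < dH r φ rS φS :=
    calc r - R < |r| - |rS| := by linarith [le_abs_self r]
      _ ≤ |(|r| - |rS|)| := le_abs_self _
      _ ≤ dH r φ rS φS := abs_abs_sub_abs_le_dH r φ rS φS
  calc dH r φ rS φS < R - r
      ↔ dH r φ rS φS < |R - r| := by
        rw [lt_abs, neg_sub, or_iff_left sub_lt_dH.not_gt]
    _ ↔ cosh (dH r φ rS φS) < cosh (R - r) := by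
        rw [Real.cosh_lt_cosh, abs_of_nonneg (dH_nonneg r φ rS φS)]
    _ ↔ r < beachRadius R rS φS φ := (lt_beachRadius_iff_cosh_dH_lt h r φ).symm

end BeachEllipse

/-- A point `P = (r, φ)` is strictly closer to the site `S = (r_S, φ_S)` than to the
sweep circle of radius `R` if and only if its radial coordinate is strictly smaller
than the beach-ellipse radius function of `S` evaluated at `φ`. -/
theorem inside_ellipse_iff (R rS φS : ℝ) (hR : 0 < R) (hrS₀ : 0 ≤ rS) (hrS : rS < R)
    (r φ : ℝ) (hr : 0 ≤ r) :
    dH r φ rS φS < R - r ↔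
      r < artanh ((Real.cosh R - Real.cosh rS) /
        (Real.sinh R - Real.sinh rS * Real.cos (φ - φS))) :=
  inside_ellipse_iff_general (abs_lt.mpr ⟨by linarith, hrS⟩) r φ
end
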